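/- Let A = {A_n : n ∈ ℕ} be a partition of ℕ×ℕ into infinitely many infinite sets and let J be an ideal on ℕ×ℕ. The following are equivalent: (1) Fin(A) is a P(J)-ideal; (2) FinFin(A) is a P(J)-ideal; (3) A_n ∈ J for all but finitely many n; (4) Fin(A) ⊆↾ J. -/

import Mathlib

open Set

/-- An ideal on an (infinite) set: contains all finite sets, is proper,
closed under subsets and finite unions. -/
def IsIdeal {α : Type*} (I : Set (Set α)) : Prop :=
  (∀ s : Set α, s.Finite → s ∈ I) ∧ (Set.univ : Set α) ∉ I ∧
  (∀ s t : Set α, s ∈ I → t ⊆ s → t ∈ I) ∧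
  (∀ s t : Set α, s ∈ I → t ∈ I → s ∪ t ∈ I)

/-- `I` is a `P(J)`-ideal. -/
def IsPJIdeal {α : Type*} (I J : Set (Set α)) : Prop :=
  ∀ f : ℕ → Set α, (∀ n, f n ∈ I) → ∃ A ∈ I, ∀ n, f n \ A ∈ J

/-- Orthogonality of two ideals. -/
def Orth {α : Type*} (I J : Set (Set α)) : Prop :=
  ∃ A : Set α, A ∈ I ∧ Aᶜ ∈ J

/-- `I ⊆↾ J` : the whole ideal `I` has a `J`-union in `I`. -/
def SubRestr {α : Type*} (I J : Set (Set α)) : Prop :=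
  ∃ E ∈ I, ∀ A ∈ I, A \ E ∈ J

/-- A tall ideal. -/
def IsTall {α : Type*} (I : Set (Set α)) : Prop :=
  ∀ X : Set α, X.Infinite → ∃ A ∈ I, (X ∩ A).Infinite

/-- A nowhere tall ideal. -/
def NowhereTall {α : Type*} (J : Set (Set α)) : Prop :=
  ∀ A : Set α, A ∉ J → ∃ B ⊆ A, B.Infinite ∧
    (fun j => j ∩ B) '' J = {s : Set α | s ⊆ B ∧ s.Finite}

/-- An almost disjoint family: infinite members, pairwise finite intersections. -/
def IsADFamily {α : Type*} (C : Set (Set α)) : Prop :=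
  (∀ A ∈ C, A.Infinite) ∧ ∀ A ∈ C, ∀ B ∈ C, A ≠ B → (A ∩ B).Finite

/-- The ideal generated by a family `C` (together with the finite sets). -/
def genIdeal {α : Type*} (C : Set (Set α)) : Set (Set α) :=
  {A | ∃ F : Finset (Set α), ↑F ⊆ C ∧ (A \ ⋃₀ ↑F).Finite}

/-- The `n`-th vertical `{n} × ℕ` in `ℕ × ℕ`. -/
def Vert (n : ℕ) : Set (ℕ × ℕ) := {p | p.1 = n}

/-- A partition of `ℕ × ℕ` into infinitely many infinite sets (indexed by `ℕ`). -/
def IsPartition (A : ℕ → Set (ℕ × ℕ)) : Prop :=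
  (∀ n, (A n).Infinite) ∧ (∀ i j, i ≠ j → A i ∩ A j = ∅) ∧ (⋃ n, A n) = Set.univ

/-- `Fin(A)`: the ideal generated by the partition `A`. -/
def FinPart (A : ℕ → Set (ℕ × ℕ)) : Set (Set (ℕ × ℕ)) :=
  {X | ∃ F : Finset ℕ, (X \ ⋃ n ∈ F, A n).Finite}

/-- `OFin(A)`: sets with finite intersection with each member of `A`. -/
def OFinPart (A : ℕ → Set (ℕ × ℕ)) : Set (Set (ℕ × ℕ)) :=
  {X | ∀ n, (X ∩ A n).Finite}

/-- `FinFin(A)`: the ideal generated by `Fin(A) ∪ OFin(A)`. -/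
def FinFinPart (A : ℕ → Set (ℕ × ℕ)) : Set (Set (ℕ × ℕ)) :=
  {X | ∃ Y ∈ FinPart A, ∃ Z ∈ OFinPart A, X ⊆ Y ∪ Z}

/-- `Sel(A)`: sets meeting each member of `A` in at most `m` points, for some `m`. -/
def SelPart (A : ℕ → Set (ℕ × ℕ)) : Set (Set (ℕ × ℕ)) :=
  {X | ∃ m : ℕ, ∀ n, (X ∩ A n).encard ≤ (m : ℕ∞)}

/-- `ED(A)`: sets meeting all but finitely many members of `A` in at most `m` points. -/
def EDPart (A : ℕ → Set (ℕ × ℕ)) : Set (Set (ℕ × ℕ)) :=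
  {X | ∃ m : ℕ, {n | (m : ℕ∞) < (X ∩ A n).encard}.Finite}

/-- The ideal `Sel` on `ℕ × ℕ` (w.r.t. the vertical partition). -/
def SelI : Set (Set (ℕ × ℕ)) := SelPart Vert

/-- The ideal `ED` on `ℕ × ℕ` (w.r.t. the vertical partition). -/
def EDI : Set (Set (ℕ × ℕ)) := EDPart Vert

/-- The ideal `Fin × ∅` on `ℕ × ℕ`, generated by the verticals. -/
def FinVert : Set (Set (ℕ × ℕ)) := FinPart Vert

/-!
A member of `FinFin(A)` meets all but finitely many `A n` in a finite set, so if it absorbs every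
`A n` modulo `J`, all but finitely many `A n` lie in `J`. Conversely, the union of the finitely
many `A n` outside `J` absorbs the whole of `Fin(A)` modulo `J`. Finally `OFin(A)` is a P-ideal by
diagonalization, and being a `P(J)`-ideal passes to the ideal generated by two ideals, so it passes
from `Fin(A)` to `FinFin(A)`.
-/

namespace IsIdeal

variable {ι α : Type*} {J : Set (Set α)} {s t : Set α}

lemma mem_of_finite (hJ : IsIdeal J) (hs : s.Finite) : s ∈ J :=
  hJ.1 s hs

lemma mem_of_subset (hJ : IsIdeal J) (hs : s ∈ J) (hts : t ⊆ s) : t ∈ J :=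
  hJ.2.2.1 s t hs hts

lemma union_mem (hJ : IsIdeal J) (hs : s ∈ J) (ht : t ∈ J) : s ∪ t ∈ J :=
  hJ.2.2.2 s t hs ht

lemma biUnion_mem (hJ : IsIdeal J) {B : ι → Set α} {F : Finset ι} (hB : ∀ i ∈ F, B i ∈ J) :
    ⋃ i ∈ F, B i ∈ J := by
  classical
  induction F using Finset.induction_on with
  | empty => simpa using hJ.mem_of_finite finite_empty
  | insert i F _ ih =>
    rw [Finset.set_biUnion_insert]
    exact hJ.union_mem (hB i (Finset.mem_insert_self i F))
      (ih fun j hj => hB j (Finset.mem_insert_of_mem hj))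

end IsIdeal

/-- The ideal generated by `I ∪ K` for ideals `I` and `K`: the sets covered by a member of `I`
together with a member of `K`. -/
def IdealSup {α : Type*} (I K : Set (Set α)) : Set (Set α) :=
  {X | ∃ Y ∈ I, ∃ Z ∈ K, X ⊆ Y ∪ Z}

section PJIdeal

variable {α : Type*} {I J K : Set (Set α)}

lemma SubRestr.isPJIdeal (h : SubRestr I J) : IsPJIdeal I J := by
  obtain ⟨E, hE, hdiff⟩ := h
  exact fun f hf => ⟨E, hE, fun n => hdiff (f n) (hf n)⟩

lemma IsPJIdeal.mono_right (hI : IsPJIdeal I J) (hJK : J ⊆ K) : IsPJIdeal I K := by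
  intro f hf
  obtain ⟨E, hE, hdiff⟩ := hI f hf
  exact ⟨E, hE, fun n => hJK (hdiff n)⟩

lemma IsPJIdeal.idealSup (hI : IsPJIdeal I J) (hJ : IsIdeal J) (hK : IsPJIdeal K J) :
    IsPJIdeal (IdealSup I K) J := by
  intro f hf
  choose Y hY Z hZ hYZ using hf
  obtain ⟨E, hE, hYE⟩ := hI Y hY
  obtain ⟨W, hW, hZW⟩ := hK Z hZ
  refine ⟨E ∪ W, ⟨E, hE, W, hW, Subset.rfl⟩, fun n => ?_⟩
  have hcover : f n \ (E ∪ W) ⊆ (Y n \ E) ∪ (Z n \ W) := by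
    rintro x ⟨hx, hxEW⟩
    exact (hYZ n hx).imp (⟨·, fun h => hxEW (.inl h)⟩) (⟨·, fun h => hxEW (.inr h)⟩)
  exact hJ.mem_of_subset (hJ.union_mem (hYE n) (hZW n)) hcover

end PJIdeal

section Family

variable {ι α : Type*}

/-- `Fin(A)` for an arbitrary indexed family `A` of subsets of a type; `FinPart` is the case of a
sequence of subsets of `ℕ × ℕ`. -/
def FinFamily (A : ι → Set α) : Set (Set α) :=
  {X | ∃ F : Finset ι, (X \ ⋃ i ∈ F, A i).Finite}

/-- `OFin(A)` for an arbitrary indexed family `A` of subsets of a type; `OFinPart` is the case of a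
sequence of subsets of `ℕ × ℕ`. -/
def OFinFamily (A : ι → Set α) : Set (Set α) :=
  {X | ∀ i, (X ∩ A i).Finite}

/-- `FinFin(A)` for an arbitrary indexed family `A` of subsets of a type; `FinFinPart` is the case
of a sequence of subsets of `ℕ × ℕ`. -/
def FinFinFamily (A : ι → Set α) : Set (Set α) :=
  IdealSup (FinFamily A) (OFinFamily A)

variable {A : ι → Set α} {J : Set (Set α)} {E : Set α}

lemma biUnion_mem_finFamily (A : ι → Set α) (F : Finset ι) : ⋃ i ∈ F, A i ∈ FinFamily A :=
  ⟨F, by simp⟩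

lemma mem_finFinFamily (A : ι → Set α) (i : ι) : A i ∈ FinFinFamily A :=
  ⟨A i, ⟨{i}, by simp⟩, ∅, fun j => by simp, subset_union_left⟩

lemma finite_setOf_infinite_inter (hA : Pairwise fun i j => (A i ∩ A j).Finite)
    (hE : E ∈ FinFinFamily A) : {i | (E ∩ A i).Infinite}.Finite := by
  obtain ⟨Y, ⟨F, hYF⟩, Z, hZ, hEYZ⟩ := hE
  refine F.finite_toSet.subset fun i hi => ?_
  by_contra hiF
  have hFi : (⋃ j ∈ F, A j ∩ A i).Finite :=
    F.finite_toSet.biUnion fun j hj => hA (ne_of_mem_of_not_mem hj hiF)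
  refine hi ((hYF.union (hFi.union (hZ i))).subset ?_)
  rintro x ⟨hxE, hxi⟩
  rcases hEYZ hxE with hxY | hxZ
  · by_cases hxF : x ∈ ⋃ j ∈ F, A j
    · obtain ⟨j, hjF, hxj⟩ := mem_iUnion₂.1 hxF
      exact .inr (.inl (mem_biUnion hjF ⟨hxj, hxi⟩))
    · exact .inl ⟨hxY, hxF⟩
  · exact .inr (.inr ⟨hxZ, hxi⟩)

lemma finite_setOf_notMem_of_diff_mem (hA : Pairwise fun i j => (A i ∩ A j).Finite)
    (hJ : IsIdeal J) (hE : E ∈ FinFinFamily A) (hdiff : ∀ i, A i \ E ∈ J) :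
    {i | A i ∉ J}.Finite := by
  refine (finite_setOf_infinite_inter hA hE).subset fun i hi hfin => hi ?_
  rw [← sdiff_union_inter (A i) E, inter_comm]
  exact hJ.union_mem (hdiff i) (hJ.mem_of_finite hfin)

lemma subRestr_finFamily (hJ : IsIdeal J) (hfin : {i | A i ∉ J}.Finite) :
    SubRestr (FinFamily A) J := by
  classical
  refine ⟨⋃ i ∈ hfin.toFinset, A i, biUnion_mem_finFamily A _, ?_⟩
  rintro X ⟨F, hXF⟩
  have hgood : ⋃ i ∈ F \ hfin.toFinset, A i ∈ J := hJ.biUnion_mem fun i hi => by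
    simpa using (Finset.mem_sdiff.1 hi).2
  refine hJ.mem_of_subset (hJ.union_mem (hJ.mem_of_finite hXF) hgood) ?_
  rintro x ⟨hxX, hxbad⟩
  by_cases hxF : x ∈ ⋃ i ∈ F, A i
  · obtain ⟨i, hiF, hxi⟩ := mem_iUnion₂.1 hxF
    have hi : i ∉ hfin.toFinset := fun hi => hxbad (mem_biUnion hi hxi)
    exact .inr (mem_biUnion (Finset.mem_sdiff.2 ⟨hiF, hi⟩) hxi)
  · exact .inl ⟨hxX, hxF⟩

lemma isPJIdeal_oFinFamily (A : ℕ → Set α) : IsPJIdeal (OFinFamily A) {s | s.Finite} := by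
  intro Z hZ
  refine ⟨⋃ n, Z n \ ⋃ k ≤ n, A k, fun m => ?_, fun n => ?_⟩
  · refine ((finite_Iio m).biUnion fun n _ => hZ n m).subset ?_
    rintro x ⟨hx, hxm⟩
    obtain ⟨n, hxn, hxA⟩ := mem_iUnion.1 hx
    have hnm : n < m := not_le.1 fun hmn => hxA (mem_biUnion hmn hxm)
    exact mem_biUnion hnm ⟨hxn, hxm⟩
  · refine ((finite_Iic n).biUnion fun k _ => hZ n k).subset ?_
    rintro x ⟨hxn, hxW⟩
    have hxA : x ∈ ⋃ k ≤ n, A k := by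
      by_contra hxA
      exact hxW (mem_iUnion.2 ⟨n, hxn, hxA⟩)
    obtain ⟨k, hkn, hxk⟩ := mem_iUnion₂.1 hxA
    exact mem_biUnion hkn ⟨hxn, hxk⟩

end Family

theorem stmt7_general {α : Type*} {A : ℕ → Set α} (hA : Pairwise fun i j => (A i ∩ A j).Finite)
    {J : Set (Set α)} (hJ : IsIdeal J) :
    List.TFAE [
      IsPJIdeal (FinFamily A) J,
      IsPJIdeal (FinFinFamily A) J,
      {n | A n ∉ J}.Finite,
      SubRestr (FinFamily A) J
    ] := by
  tfae_have 1 → 2 := fun h =>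
    h.idealSup hJ ((isPJIdeal_oFinFamily A).mono_right fun _ => hJ.mem_of_finite)
  tfae_have 2 → 3 := by
    intro h
    obtain ⟨E, hE, hdiff⟩ := h A (mem_finFinFamily A)
    exact finite_setOf_notMem_of_diff_mem hA hJ hE hdiff
  tfae_have 3 → 4 := subRestr_finFamily hJ
  tfae_have 4 → 1 := SubRestr.isPJIdeal
  tfae_finish

theorem stmt7 (A : ℕ → Set (ℕ × ℕ)) (hA : IsPartition A)
    (J : Set (Set (ℕ × ℕ))) (hJ : IsIdeal J) :
    List.TFAE [
      IsPJIdeal (FinPart A) J,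
      IsPJIdeal (FinFinPart A) J,
      {n | A n ∉ J}.Finite,
      SubRestr (FinPart A) J
    ] :=
  stmt7_general (fun i j hij => finite_empty.subset (hA.2.1 i j hij).subset) hJ
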